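/- arXiv:math/0608726 — 8 statements merged into one kernel-verified Lean document; each statement's English description precedes it below -/
import Mathlib

section
/- Let D ⊆ ℝ² be open with coordinates (u,v), and let s₁, t₁, s₂, t₂, p : D → ℝ be smooth functions satisfying the Dirac equations ∂_u t₂ = −p s₁, ∂_v s₁ = p t₂, ∂_u s₂ = p t₁, ∂_v t₁ = −p s₂. Then the three 1-forms appearing in the Weierstraß representation formula are closed; explicitly: ∂_v(s₁² + t₁²) = −∂_u(s₂² + t₂²), ∂_v(s₁² − t₁²) = ∂_u(s₂² − t₂²), and ∂_v(s₁ t₁) = ∂_u(s₂ t₂) on D. -/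
noncomputable section

/-- The Minkowski bilinear form on `𝔼³₁ = ℝ³`: `⟨a,b⟩ = −a₁b₁ + a₂b₂ + a₃b₃`. -/
def mink (a b : ℝ × ℝ × ℝ) : ℝ := -(a.1 * b.1) + a.2.1 * b.2.1 + a.2.2 * b.2.2

/-- Partial derivative in the first coordinate. -/
def pu {E : Type*} [NormedAddCommGroup E] [NormedSpace ℝ E] (f : ℝ × ℝ → E) (w : ℝ × ℝ) : E :=
  fderiv ℝ f w (1, 0)

/-- Partial derivative in the second coordinate. -/
def pv {E : Type*} [NormedAddCommGroup E] [NormedSpace ℝ E] (f : ℝ × ℝ → E) (w : ℝ × ℝ) : E :=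
  fderiv ℝ f w (0, 1)

/-- If `s₁, t₁, s₂, t₂` satisfy the Dirac equations with potential `p`, then the
1-forms of the Weierstraß representation formula are closed:
`∂_v(s₁²+t₁²) = −∂_u(s₂²+t₂²)`, `∂_v(s₁²−t₁²) = ∂_u(s₂²−t₂²)`, `∂_v(s₁t₁) = ∂_u(s₂t₂)`. -/
theorem weierstrass_one_forms_closed
    (D : Set (ℝ × ℝ)) (hD : IsOpen D)
    (s₁ t₁ s₂ t₂ p : ℝ × ℝ → ℝ)
    (hs₁ : ContDiffOn ℝ (⊤ : ℕ∞) s₁ D) (ht₁ : ContDiffOn ℝ (⊤ : ℕ∞) t₁ D)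
    (hs₂ : ContDiffOn ℝ (⊤ : ℕ∞) s₂ D) (ht₂ : ContDiffOn ℝ (⊤ : ℕ∞) t₂ D)
    (hp : ContDiffOn ℝ (⊤ : ℕ∞) p D)
    (hd1 : ∀ w ∈ D, pu t₂ w = -(p w * s₁ w))
    (hd2 : ∀ w ∈ D, pv s₁ w = p w * t₂ w)
    (hd3 : ∀ w ∈ D, pu s₂ w = p w * t₁ w)
    (hd4 : ∀ w ∈ D, pv t₁ w = -(p w * s₂ w)) :
    ∀ w ∈ D,
      pv (fun z => s₁ z ^ 2 + t₁ z ^ 2) w = -pu (fun z => s₂ z ^ 2 + t₂ z ^ 2) w ∧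
      pv (fun z => s₁ z ^ 2 - t₁ z ^ 2) w = pu (fun z => s₂ z ^ 2 - t₂ z ^ 2) w ∧
      pv (fun z => s₁ z * t₁ z) w = pu (fun z => s₂ z * t₂ z) w := by
  intro w hw
  have key : ∀ f : ℝ × ℝ → ℝ, ContDiffOn ℝ (⊤ : ℕ∞) f D → HasFDerivAt f (fderiv ℝ f w) w := by
    intro f hf
    exact ((hf.contDiffAt (hD.mem_nhds hw)).differentiableAt (by simp)).hasFDerivAt
  have a1 := key s₁ hs₁
  have b1 := key t₁ ht₁
  have a2 := key s₂ hs₂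
  have b2 := key t₂ ht₂
  have e1 := hd1 w hw
  have e2 := hd2 w hw
  have e3 := hd3 w hw
  have e4 := hd4 w hw
  unfold pu at e1 e3
  unfold pv at e2 e4
  unfold pu pv
  refine ⟨?_, ?_, ?_⟩
  · rw [((a1.pow 2).fun_add (b1.pow 2)).fderiv, ((a2.pow 2).fun_add (b2.pow 2)).fderiv]
    simp [e1, e2, e3, e4]
    ring
  · rw [((a1.pow 2).fun_sub (b1.pow 2)).fderiv, ((a2.pow 2).fun_sub (b2.pow 2)).fderiv]
    simp [e1, e2, e3, e4]
    ring
  · rw [(a1.fun_mul b1).fderiv, (a2.fun_mul b2).fderiv]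
    simp [e1, e2, e3, e4]
    ring
end
end

section
/- Let D ⊆ ℝ² be open with coordinates (u,v), and let s₁, t₁, s₂, t₂, p : D → ℝ be smooth functions satisfying the Dirac equations ∂_u t₂ = −p s₁, ∂_v s₁ = p t₂, ∂_u s₂ = p t₁, ∂_v t₁ = −p s₂, with s₁s₂ + t₁t₂ nonvanishing on D. Let φ : D → ℝ³ be smooth with φ_u = (½(s₁² + t₁²), ½(s₁² − t₁²), −s₁t₁) and φ_v = (−½(s₂² + t₂²), ½(s₂² − t₂²), −s₂t₂), and define N := (s₁s₂ + t₁t₂)^{−1}·(s₁t₂ − s₂t₁, s₁t₂ + s₂t₁, s₁s₂ − t₁t₂). Then ⟨N,N⟩ = 1, ⟨N,φ_u⟩ = ⟨N,φ_v⟩ = 0, φ_uv = p·(s₁s₂ + t₁t₂)·N, and hence the mean curvature H := 2e^{−ω}⟨φ_uv,N⟩, where e^{ω/2} := s₁s₂ + t₁t₂, satisfies H = 2p·e^{−ω/2}. -/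
noncomputable section

/-- With `Φ̂` satisfying the Dirac equations with potential `p`, and `φ` having the
Weierstraß derivatives, the vector `N = (s₁s₂+t₁t₂)⁻¹(s₁t₂−s₂t₁, s₁t₂+s₂t₁, s₁s₂−t₁t₂)`
is a unit normal, `φ_uv = p(s₁s₂+t₁t₂)N`, and the mean curvature
`H = 2e^{−ω}⟨φ_uv,N⟩`, with `e^{ω/2} = s₁s₂+t₁t₂`, equals `2p e^{−ω/2}`. -/
theorem weierstrass_mean_curvature
    (D : Set (ℝ × ℝ)) (hD : IsOpen D)
    (s₁ t₁ s₂ t₂ p : ℝ × ℝ → ℝ) (φ : ℝ × ℝ → ℝ × ℝ × ℝ)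
    (hs₁ : ContDiffOn ℝ (⊤ : ℕ∞) s₁ D) (ht₁ : ContDiffOn ℝ (⊤ : ℕ∞) t₁ D)
    (hs₂ : ContDiffOn ℝ (⊤ : ℕ∞) s₂ D) (ht₂ : ContDiffOn ℝ (⊤ : ℕ∞) t₂ D)
    (hp : ContDiffOn ℝ (⊤ : ℕ∞) p D) (hφ : ContDiffOn ℝ (⊤ : ℕ∞) φ D)
    (hd1 : ∀ w ∈ D, pu t₂ w = -(p w * s₁ w))
    (hd2 : ∀ w ∈ D, pv s₁ w = p w * t₂ w)
    (hd3 : ∀ w ∈ D, pu s₂ w = p w * t₁ w)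
    (hd4 : ∀ w ∈ D, pv t₁ w = -(p w * s₂ w))
    (hnz : ∀ w ∈ D, s₁ w * s₂ w + t₁ w * t₂ w ≠ 0)
    (hφu : ∀ w ∈ D, pu φ w =
      (1/2 * (s₁ w^2 + t₁ w^2), 1/2 * (s₁ w^2 - t₁ w^2), -(s₁ w * t₁ w)))
    (hφv : ∀ w ∈ D, pv φ w =
      (-(1/2) * (s₂ w^2 + t₂ w^2), 1/2 * (s₂ w^2 - t₂ w^2), -(s₂ w * t₂ w)))
    (N : ℝ × ℝ → ℝ × ℝ × ℝ)
    (hN : ∀ w ∈ D, N w = (s₁ w * s₂ w + t₁ w * t₂ w)⁻¹ •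
      ((s₁ w * t₂ w - s₂ w * t₁ w, s₁ w * t₂ w + s₂ w * t₁ w,
        s₁ w * s₂ w - t₁ w * t₂ w) : ℝ × ℝ × ℝ)) :
    ∀ w ∈ D,
      mink (N w) (N w) = 1 ∧
      mink (N w) (pu φ w) = 0 ∧
      mink (N w) (pv φ w) = 0 ∧
      pv (pu φ) w = (p w * (s₁ w * s₂ w + t₁ w * t₂ w)) • N w ∧
      2 * ((s₁ w * s₂ w + t₁ w * t₂ w) ^ 2)⁻¹ * mink (pv (pu φ) w) (N w)
        = 2 * p w * (s₁ w * s₂ w + t₁ w * t₂ w)⁻¹ := by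
  intro w hw
  have hk := hnz w hw
  have d1 : HasFDerivAt s₁ (fderiv ℝ s₁ w) w :=
    ((hs₁.contDiffAt (hD.mem_nhds hw)).differentiableAt (by simp)).hasFDerivAt
  have d2 : HasFDerivAt t₁ (fderiv ℝ t₁ w) w :=
    ((ht₁.contDiffAt (hD.mem_nhds hw)).differentiableAt (by simp)).hasFDerivAt
  have e1 := hd2 w hw
  have e2 := hd4 w hw
  have hE : pu φ =ᶠ[nhds w] fun w => (1/2 * (s₁ w * s₁ w + t₁ w * t₁ w),
      1/2 * (s₁ w * s₁ w - t₁ w * t₁ w), -(s₁ w * t₁ w)) := by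
    filter_upwards [hD.mem_nhds hw] with x hx
    rw [hφu x hx]
    simp only [pow_two]
  have hF := ((((d1.mul d1).add (d2.mul d2)).const_mul (1/2 : ℝ)).prodMk
    ((((d1.mul d1).sub (d2.mul d2)).const_mul (1/2 : ℝ)).prodMk (d1.mul d2).neg))
  have hG := (hF.congr_of_eventuallyEq hE).fderiv
  have key : pv (pu φ) w = (p w * (s₁ w * t₂ w - s₂ w * t₁ w),
      p w * (s₁ w * t₂ w + s₂ w * t₁ w), p w * (s₁ w * s₂ w - t₁ w * t₂ w)) := by
    unfold pv at e1 e2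
    rw [pv, hG]
    simp [e1, e2]
    refine ⟨?_, ?_, ?_⟩ <;> ring
  rw [key, hφu w hw, hφv w hw, hN w hw]
  simp only [mink, Prod.smul_mk, smul_eq_mul, Prod.mk.injEq]
  refine ⟨?_, ?_, ?_, ⟨?_, ?_, ?_⟩, ?_⟩
  · field_simp; ring
  · field_simp; ring
  · field_simp; ring
  · rw [mul_assoc, mul_inv_cancel_left₀ hk]
  · rw [mul_assoc, mul_inv_cancel_left₀ hk]
  · rw [mul_assoc, mul_inv_cancel_left₀ hk]
  · field_simp; ring
end
end

section
/- Let D ⊆ ℝ² be open with coordinates (u,v), and let ω, H, Q, R, s₁, t₁, s₂, t₂ : D → ℝ be smooth with t₁ and t₂ nonvanishing, s₁s₂ + t₁t₂ = e^{ω/2}, and satisfying the Lax equations: ∂_u s₁ = (ω_u/2)s₁ + Q e^{−ω/2} t₂, ∂_u t₁ = (ω_u/2)t₁ − Q e^{−ω/2} s₂, ∂_v s₁ = (H/2)e^{ω/2} t₂, ∂_v t₁ = −(H/2)e^{ω/2} s₂, ∂_u t₂ = −(H/2)e^{ω/2} s₁, ∂_u s₂ = (H/2)e^{ω/2} t₁,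 ∂_v t₂ = −R e^{−ω/2} s₁ + (ω_v/2)t₂, ∂_v s₂ = R e^{−ω/2} t₁ + (ω_v/2)s₂. Set q := s₁/t₁, r := s₂/t₂, f := t₁², g := t₂². Then the projected Gauß map (q,r) satisfies: q_u = Q/f, q_v = (H/2)e^{ω}/f = (H/2)(1+qr)²g, r_u = (H/2)e^{ω}/g = (H/2)(1+qr)²f, and r_v = R/g. -/
noncomputable section

theorem fderiv_quot_aux {a b : ℝ × ℝ → ℝ} {w : ℝ × ℝ} (ha : DifferentiableAt ℝ a w)
    (hb : DifferentiableAt ℝ b w) (h : b w ≠ 0) (x : ℝ × ℝ) :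
    fderiv ℝ (fun z => a z / b z) w x
      = (fderiv ℝ a w x * b w - a w * fderiv ℝ b w x) / b w ^ 2 := by
  have hc : DifferentiableAt ℝ (fun z => a z / b z) w := by
    simp only [div_eq_mul_inv]
    exact ha.mul (hb.inv h)
  have hm : fderiv ℝ (fun z => (a z / b z) * b z) w = fderiv ℝ a w := by
    apply Filter.EventuallyEq.fderiv_eq
    filter_upwards [hb.continuousAt.eventually_ne h] with z hz
    field_simp
  have h2 := fderiv_fun_mul hc hb
  rw [hm] at h2
  rw [h2]
  simp only [ContinuousLinearMap.add_apply, ContinuousLinearMap.smul_apply, smul_eq_mul]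
  field_simp
  ring

/-- The projected Gauß map `(q,r) = (s₁/t₁, s₂/t₂)` of a frame satisfying the Lax
equations satisfies `q_u = Q/f`, `q_v = (H/2)e^ω/f = (H/2)(1+qr)²g`,
`r_u = (H/2)e^ω/g = (H/2)(1+qr)²f`, `r_v = R/g`, where `f = t₁²`, `g = t₂²`. -/
theorem projected_gauss_map_equations
    (D : Set (ℝ × ℝ)) (hD : IsOpen D)
    (ω H Q R s₁ t₁ s₂ t₂ : ℝ × ℝ → ℝ)
    (hω : ContDiffOn ℝ (⊤ : ℕ∞) ω D) (hH : ContDiffOn ℝ (⊤ : ℕ∞) H D)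
    (hQ : ContDiffOn ℝ (⊤ : ℕ∞) Q D) (hR : ContDiffOn ℝ (⊤ : ℕ∞) R D)
    (hs₁ : ContDiffOn ℝ (⊤ : ℕ∞) s₁ D) (ht₁ : ContDiffOn ℝ (⊤ : ℕ∞) t₁ D)
    (hs₂ : ContDiffOn ℝ (⊤ : ℕ∞) s₂ D) (ht₂ : ContDiffOn ℝ (⊤ : ℕ∞) t₂ D)
    (ht₁nz : ∀ w ∈ D, t₁ w ≠ 0) (ht₂nz : ∀ w ∈ D, t₂ w ≠ 0)
    (hdet : ∀ w ∈ D, s₁ w * s₂ w + t₁ w * t₂ w = Real.exp (ω w / 2))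
    (h1 : ∀ w ∈ D, pu s₁ w = pu ω w / 2 * s₁ w + Q w * Real.exp (-ω w / 2) * t₂ w)
    (h2 : ∀ w ∈ D, pu t₁ w = pu ω w / 2 * t₁ w - Q w * Real.exp (-ω w / 2) * s₂ w)
    (h3 : ∀ w ∈ D, pv s₁ w = H w / 2 * Real.exp (ω w / 2) * t₂ w)
    (h4 : ∀ w ∈ D, pv t₁ w = -(H w / 2 * Real.exp (ω w / 2)) * s₂ w)
    (h5 : ∀ w ∈ D, pu t₂ w = -(H w / 2 * Real.exp (ω w / 2)) * s₁ w)
    (h6 : ∀ w ∈ D, pu s₂ w = H w / 2 * Real.exp (ω w / 2) * t₁ w)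
    (h7 : ∀ w ∈ D, pv t₂ w = -(R w * Real.exp (-ω w / 2)) * s₁ w + pv ω w / 2 * t₂ w)
    (h8 : ∀ w ∈ D, pv s₂ w = R w * Real.exp (-ω w / 2) * t₁ w + pv ω w / 2 * s₂ w) :
    ∀ w ∈ D,
      pu (fun z => s₁ z / t₁ z) w = Q w / t₁ w ^ 2 ∧
      pv (fun z => s₁ z / t₁ z) w = H w / 2 * Real.exp (ω w) / t₁ w ^ 2 ∧
      pv (fun z => s₁ z / t₁ z) w
        = H w / 2 * (1 + s₁ w / t₁ w * (s₂ w / t₂ w)) ^ 2 * t₂ w ^ 2 ∧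
      pu (fun z => s₂ z / t₂ z) w = H w / 2 * Real.exp (ω w) / t₂ w ^ 2 ∧
      pu (fun z => s₂ z / t₂ z) w
        = H w / 2 * (1 + s₁ w / t₁ w * (s₂ w / t₂ w)) ^ 2 * t₁ w ^ 2 ∧
      pv (fun z => s₂ z / t₂ z) w = R w / t₂ w ^ 2 := by
  intro w hw
  have hn := hD.mem_nhds hw
  have ds₁ := (hs₁.contDiffAt hn).differentiableAt (by simp)
  have dt₁ := (ht₁.contDiffAt hn).differentiableAt (by simp)
  have ds₂ := (hs₂.contDiffAt hn).differentiableAt (by simp)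
  have dt₂ := (ht₂.contDiffAt hn).differentiableAt (by simp)
  have n1 := ht₁nz w hw
  have n2 := ht₂nz w hw
  have hd := hdet w hw
  have e1 : Real.exp (ω w) = Real.exp (ω w / 2) ^ 2 := by
    rw [← Real.exp_nat_mul]; congr 1; push_cast; ring
  have e2 : Real.exp (-ω w / 2) * Real.exp (ω w / 2) = 1 := by
    rw [← Real.exp_add, ← Real.exp_zero]; congr 1; ring
  have qu : pu (fun z => s₁ z / t₁ z) w = (pu s₁ w * t₁ w - s₁ w * pu t₁ w) / t₁ w ^ 2 :=
    fderiv_quot_aux ds₁ dt₁ n1 _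
  have qv : pv (fun z => s₁ z / t₁ z) w = (pv s₁ w * t₁ w - s₁ w * pv t₁ w) / t₁ w ^ 2 :=
    fderiv_quot_aux ds₁ dt₁ n1 _
  have ru : pu (fun z => s₂ z / t₂ z) w = (pu s₂ w * t₂ w - s₂ w * pu t₂ w) / t₂ w ^ 2 :=
    fderiv_quot_aux ds₂ dt₂ n2 _
  have rv : pv (fun z => s₂ z / t₂ z) w = (pv s₂ w * t₂ w - s₂ w * pv t₂ w) / t₂ w ^ 2 :=
    fderiv_quot_aux ds₂ dt₂ n2 _
  rw [h1 w hw, h2 w hw] at qu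
  rw [h3 w hw, h4 w hw] at qv
  rw [h5 w hw, h6 w hw] at ru
  rw [h7 w hw, h8 w hw] at rv
  rw [qu, qv, ru, rv, e1]
  rw [← hd] at e2 ⊢
  refine ⟨?_, ?_, ?_, ?_, ?_, ?_⟩
  · congr 1
    linear_combination Q w * e2
  · congr 1
    ring
  · field_simp
    ring
  · congr 1
    ring
  · field_simp
    ring
  · congr 1
    linear_combination R w * e2
end
end

section
/- (Weierstraß representation formula for timelike minimal surfaces, direct part.) Let D ⊆ ℝ² be open with coordinates (u,v), let q, f : D → ℝ be smooth with ∂_v q = ∂_v f = 0 (Lorentz holomorphic), let r, g : D → ℝ be smooth with ∂_u r = ∂_u g = 0 (Lorentz antiholomorphic), and let φ : D → ℝ³ be smooth with φ_u = (½(1+q²), −½(1−q²), −q)·f and φ_v = (−½(1+r²), −½(1−r²), −r)·g. Then φ_uv = 0, ⟨φ_u,φ_u⟩ = ⟨φ_v,φ_v⟩ = 0, and ⟨φ_u,φ_v⟩ = ½(1+qr)²fg; i.e. φ is a timelike minimal surface with metric ds² = (1+qr)²f g du dv wherever (1+qr)²fg ≠ 0. -/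
noncomputable section

/-- Weierstraß representation formula for timelike minimal surfaces (direct part):
for Lorentz holomorphic `q, f` and Lorentz antiholomorphic `r, g`, the map `φ` with
`φ_u = (½(1+q²), −½(1−q²), −q)f`, `φ_v = (−½(1+r²), −½(1−r²), −r)g` satisfies the wave
equation `φ_uv = 0`, is null-conformal, and has metric `(1+qr)² f g du dv`. -/
theorem weierstrass_representation_minimal
    (D : Set (ℝ × ℝ)) (hD : IsOpen D)
    (q f r g : ℝ × ℝ → ℝ)
    (hq : ContDiffOn ℝ (⊤ : ℕ∞) q D) (hf : ContDiffOn ℝ (⊤ : ℕ∞) f D)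
    (hr : ContDiffOn ℝ (⊤ : ℕ∞) r D) (hg : ContDiffOn ℝ (⊤ : ℕ∞) g D)
    (hqv : ∀ w ∈ D, pv q w = 0) (hfv : ∀ w ∈ D, pv f w = 0)
    (hru : ∀ w ∈ D, pu r w = 0) (hgu : ∀ w ∈ D, pu g w = 0)
    (φ : ℝ × ℝ → ℝ × ℝ × ℝ) (hφ : ContDiffOn ℝ (⊤ : ℕ∞) φ D)
    (hφu : ∀ w ∈ D, pu φ w =
      f w • ((1/2 * (1 + q w^2), -(1/2) * (1 - q w^2), -q w) : ℝ × ℝ × ℝ))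
    (hφv : ∀ w ∈ D, pv φ w =
      g w • ((-(1/2) * (1 + r w^2), -(1/2) * (1 - r w^2), -r w) : ℝ × ℝ × ℝ)) :
    ∀ w ∈ D,
      pv (pu φ) w = 0 ∧
      mink (pu φ w) (pu φ w) = 0 ∧
      mink (pv φ w) (pv φ w) = 0 ∧
      mink (pu φ w) (pv φ w) = 1/2 * (1 + q w * r w) ^ 2 * f w * g w := by
  intro w hw
  refine ⟨?_, ?_, ?_, ?_⟩
  · have hn : D ∈ nhds w := hD.mem_nhds hw
    have hqd : HasFDerivAt q (fderiv ℝ q w) w :=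
      ((hq.contDiffAt hn).differentiableAt (by simp)).hasFDerivAt
    have hfd : HasFDerivAt f (fderiv ℝ f w) w :=
      ((hf.contDiffAt hn).differentiableAt (by simp)).hasFDerivAt
    have hq0 : fderiv ℝ q w (0, 1) = 0 := hqv w hw
    have hf0 : fderiv ℝ f w (0, 1) = 0 := hfv w hw
    have he : pu φ =ᶠ[nhds w] fun w => f w •
        ((1/2 * (1 + q w^2), -(1/2) * (1 - q w^2), -q w) : ℝ × ℝ × ℝ) := by
      filter_upwards [hn] with x hx using hφu x hx
    have h2 := hqd.pow 2
    have hd := hfd.smul (((h2.const_add 1).const_mul (1/2)).prodMk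
      (((h2.const_sub 1).const_mul (-(1/2))).prodMk hqd.neg))
    have hd' := HasFDerivAt.congr_of_eventuallyEq hd he
    unfold pv
    rw [hd'.fderiv]
    simp [hq0, hf0]
  · rw [hφu w hw]; simp [mink]; ring
  · rw [hφv w hw]; simp [mink]; ring
  · rw [hφu w hw, hφv w hw]; simp [mink]; ring
end
end

section
/- (Weierstraß representation formula for timelike minimal surfaces, converse part.) Let D ⊆ ℝ² be open with coordinates (u,v), and let φ = (φ₁,φ₂,φ₃) : D → ℝ³ be smooth with φ_uv = 0 and ⟨φ_u,φ_u⟩ = ⟨φ_v,φ_v⟩ = 0. Write ξ = (ξ₁,ξ₂,ξ₃) := φ_u and η = (η₁,η₂,η₃) := φ_v, and assume f := ξ₁ − ξ₂ and g := −(η₁ + η₂) are nonvanishing on D. Then the functions q := −ξ₃/f and r := −η₃/g satisfy φ_u = (½(1+q²), −½(1−q²), −q)·f and φ_v = (−½(1+r²), −½(1−r²), −r)·g on D, with ∂_v q = ∂_v f = 0 and ∂_u r = ∂_u g = 0. Hence every such timelike minimal surface is given by the Weierstraß representation formula up to translations. -/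
noncomputable section

theorem wr_chain (G : ℝ × ℝ → ℝ × ℝ × ℝ) (F : ℝ × ℝ × ℝ → ℝ) (w e : ℝ × ℝ)
    (hF : DifferentiableAt ℝ F (G w)) (hG : DifferentiableAt ℝ G w)
    (h : fderiv ℝ G w e = 0) : fderiv ℝ (fun z => F (G z)) w e = 0 := by
  have := fderiv_comp w hF hG
  have h2 : fderiv ℝ (fun z => F (G z)) w = (fderiv ℝ F (G w)).comp (fderiv ℝ G w) := this
  rw [h2, ContinuousLinearMap.comp_apply, h, map_zero]

/-- Weierstraß representation formula for timelike minimal surfaces (converse part):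
any conformal timelike minimal surface `φ` (i.e. `φ_uv = 0`, `⟨φ_u,φ_u⟩ = ⟨φ_v,φ_v⟩ = 0`)
with `f := ξ₁ − ξ₂`, `g := −(η₁ + η₂)` nonvanishing (`ξ = φ_u`, `η = φ_v`) is given by the
Weierstraß data `q := −ξ₃/f` (Lorentz holomorphic, together with `f`) and `r := −η₃/g`
(Lorentz antiholomorphic, together with `g`). -/
theorem weierstrass_representation_converse
    (D : Set (ℝ × ℝ)) (hD : IsOpen D)
    (φ : ℝ × ℝ → ℝ × ℝ × ℝ) (hφ : ContDiffOn ℝ (⊤ : ℕ∞) φ D)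
    (hwave : ∀ w ∈ D, pv (pu φ) w = 0)
    (hnull₁ : ∀ w ∈ D, mink (pu φ w) (pu φ w) = 0)
    (hnull₂ : ∀ w ∈ D, mink (pv φ w) (pv φ w) = 0)
    (hfnz : ∀ w ∈ D, (pu φ w).1 - (pu φ w).2.1 ≠ 0)
    (hgnz : ∀ w ∈ D, -((pv φ w).1 + (pv φ w).2.1) ≠ 0) :
    ∀ w ∈ D,
      (pu φ w = ((pu φ w).1 - (pu φ w).2.1) •
        ((1/2 * (1 + (-(pu φ w).2.2 / ((pu φ w).1 - (pu φ w).2.1))^2),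
          -(1/2) * (1 - (-(pu φ w).2.2 / ((pu φ w).1 - (pu φ w).2.1))^2),
          -(-(pu φ w).2.2 / ((pu φ w).1 - (pu φ w).2.1))) : ℝ × ℝ × ℝ)) ∧
      (pv φ w = (-((pv φ w).1 + (pv φ w).2.1)) •
        ((-(1/2) * (1 + (-(pv φ w).2.2 / (-((pv φ w).1 + (pv φ w).2.1)))^2),
          -(1/2) * (1 - (-(pv φ w).2.2 / (-((pv φ w).1 + (pv φ w).2.1)))^2),
          -(-(pv φ w).2.2 / (-((pv φ w).1 + (pv φ w).2.1)))) : ℝ × ℝ × ℝ)) ∧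
      pv (fun z => -(pu φ z).2.2 / ((pu φ z).1 - (pu φ z).2.1)) w = 0 ∧
      pv (fun z => (pu φ z).1 - (pu φ z).2.1) w = 0 ∧
      pu (fun z => -(pv φ z).2.2 / (-((pv φ z).1 + (pv φ z).2.1))) w = 0 ∧
      pu (fun z => -((pv φ z).1 + (pv φ z).2.1)) w = 0 := by
  intro w hw
  have hc : ContDiffAt ℝ (⊤ : ℕ∞) φ w := hφ.contDiffAt (hD.mem_nhds hw)
  have hd : DifferentiableAt ℝ (fderiv ℝ φ) w :=
    (hc.fderiv_right (m := 1) (by norm_cast)).differentiableAt (by norm_num)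
  have hdu : DifferentiableAt ℝ (pu φ) w := hd.clm_apply (differentiableAt_const _)
  have hdv : DifferentiableAt ℝ (pv φ) w := hd.clm_apply (differentiableAt_const _)
  have key : ∀ e e' : ℝ × ℝ,
      fderiv ℝ (fun z => fderiv ℝ φ z e) w e' = fderiv ℝ (fderiv ℝ φ) w e' e := by
    intro e e'
    rw [fderiv_clm_apply hd (differentiableAt_const _)]
    simp
  have hsymm : IsSymmSndFDerivAt ℝ φ w := hc.isSymmSndFDerivAt (by simp; norm_cast)
  have h1 : fderiv ℝ (pu φ) w (0, 1) = 0 := hwave w hw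
  have h2 : fderiv ℝ (pv φ) w (1, 0) = 0 := by
    have a := key (0, 1) (1, 0)
    have b := key (1, 0) (0, 1)
    have c : fderiv ℝ (fun z => fderiv ℝ φ z (1, 0)) w (0, 1) = 0 := h1
    have d : fderiv ℝ (fun z => fderiv ℝ φ z (0, 1)) w (1, 0) = 0 := by
      rw [a, hsymm.eq, ← b, c]
    exact d
  have hf := hfnz w hw
  have hg := hgnz w hw
  have n1 := hnull₁ w hw
  have n2 := hnull₂ w hw
  refine ⟨?_, ?_, ?_, ?_, ?_, ?_⟩
  · generalize pu φ w = x at hf n1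
    obtain ⟨a, b, c⟩ := x
    simp only [mink] at hf n1 ⊢
    ext
    · simp only [Prod.smul_mk, smul_eq_mul]
      field_simp
      linarith
    · simp only [Prod.smul_mk, smul_eq_mul]
      field_simp
      linarith
    · simp only [Prod.smul_mk, smul_eq_mul]
      field_simp
  · generalize pv φ w = x at hg n2
    obtain ⟨a, b, c⟩ := x
    simp only [mink] at hg n2 ⊢
    have hg' : a + b ≠ 0 := fun h => hg (by rw [h, neg_zero])
    ext
    · simp only [Prod.smul_mk, smul_eq_mul]
      field_simp
      linarith
    · simp only [Prod.smul_mk, smul_eq_mul]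
      field_simp
      linarith
    · simp only [Prod.smul_mk, smul_eq_mul]
      field_simp
  · exact wr_chain (pu φ) (fun x => -x.2.2 / (x.1 - x.2.1)) w (0, 1)
      (by fun_prop (disch := assumption)) hdu h1
  · exact wr_chain (pu φ) (fun x => x.1 - x.2.1) w (0, 1) (by fun_prop) hdu h1
  · exact wr_chain (pv φ) (fun x => -x.2.2 / (-(x.1 + x.2.1))) w (1, 0)
      (by fun_prop (disch := assumption)) hdv h2
  · exact wr_chain (pv φ) (fun x => -(x.1 + x.2.1)) w (1, 0) (by fun_prop) hdv h2
end
end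

section
/- The Ad-action of SL(2,ℝ) on the pseudosphere S²₁ is transitive: for every 2×2 real matrix X with trace 0 and det X = −1 (the matrix form of a point of the pseudosphere S²₁ = {x ∈ 𝔼³₁ : ⟨x,x⟩ = 1}), there exists h ∈ SL(2,ℝ) (det h = 1) such that X = h·k'·h⁻¹, where k' = [[1,0],[0,−1]]. Hence S²₁ is identified with the homogeneous space SL(2,ℝ)/SO(1,1) = {h k' h⁻¹ : h ∈ SL(2,ℝ)}. -/
noncomputable section

/-- The Ad-action of `SL(2,ℝ)` on the pseudosphere `S²₁` is transitive: every trace-zero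
`2×2` real matrix `X` with `det X = −1` (i.e. a point of `S²₁` in matrix form) is of the
form `h k' h⁻¹` with `h ∈ SL(2,ℝ)` and `k' = [[1,0],[0,−1]]`. -/
theorem ad_action_transitive_on_pseudosphere (X : Matrix (Fin 2) (Fin 2) ℝ)
    (htr : X.trace = 0) (hdet : X.det = -1) :
    ∃ h : Matrix (Fin 2) (Fin 2) ℝ, h.det = 1 ∧
      X = h * !![(1 : ℝ), 0; 0, -1] * h⁻¹ := by
  have key : ∀ h : Matrix (Fin 2) (Fin 2) ℝ, h.det = 1 →
      X * h = h * !![(1 : ℝ), 0; 0, -1] → X = h * !![(1 : ℝ), 0; 0, -1] * h⁻¹ := by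
    intro h hd hX
    rw [← hX, Matrix.mul_assoc, Matrix.mul_nonsing_inv h (by rw [hd]; exact isUnit_one),
      Matrix.mul_one]
  suffices H : ∃ h : Matrix (Fin 2) (Fin 2) ℝ, h.det = 1 ∧
      X * h = h * !![(1 : ℝ), 0; 0, -1] by
    obtain ⟨h, h1, h2⟩ := H
    exact ⟨h, h1, key h h1 h2⟩
  clear key
  obtain ⟨a, b, c, d, rfl⟩ : ∃ a b c d : ℝ, X = !![a, b; c, d] :=
    ⟨_, _, _, _, Matrix.eta_fin_two X⟩
  rw [Matrix.trace_fin_two_of] at htr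
  rw [Matrix.det_fin_two_of] at hdet
  obtain rfl : d = -a := by linarith
  by_cases ha : a + 1 = 0
  · obtain rfl : a = -1 := by linarith
    have hbc : b * c = 0 := by linarith
    refine ⟨!![b, -1 / 2; 2, c / 4], ?_, ?_⟩
    · rw [Matrix.det_fin_two_of]; linarith
    · ext i j
      fin_cases i <;> fin_cases j <;> simp [Matrix.mul_apply, Fin.sum_univ_two] <;>
        first
        | linarith
        | (rcases mul_eq_zero.mp hbc with h | h <;> simp [h] <;> norm_num)
  · refine ⟨!![a + 1, -b / (2 * (a + 1)); c, 1 / 2], ?_, ?_⟩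
    · rw [Matrix.det_fin_two_of]; field_simp; linarith
    · ext i j
      fin_cases i <;> fin_cases j <;> simp [Matrix.mul_apply, Fin.sum_univ_two] <;>
        field_simp <;> linarith
end
end

section
/- Let D ⊆ ℝ² be open and connected with coordinates (u,v), let H ≠ 0 be a real constant, and let q, r : D → ℝ be smooth with ∂_u q = 0, ∂_v r = 0, and 1 + qr nonvanishing on D. Let φ : D → ℝ³ be smooth with φ_u = (½(1+q²), −½(1−q²), −q)·(2 r_u/(H(1+qr)²)) and φ_v = (−½(1+r²), −½(1−r²), −r)·(2 q_v/(H(1+qr)²)). Then the map c := φ + (1/(H(1+qr)))·(q−r, q+r, qr−1) is constant on D, and ⟨φ − c, φ − c⟩ = 1/H² at every point of D; i.e., a totally umbilic non-minimal timelike surface is part of the pseudosphere of radius 1/|H| centered at c. -/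
noncomputable section

/-- A totally umbilic non-minimal timelike surface (constant mean curvature `H ≠ 0`,
Lorentz antiholomorphic `q`, Lorentz holomorphic `r`, Weierstraß data
`f = 2r_u/(H(1+qr)²)`, `g = 2q_v/(H(1+qr)²)`) is part of the pseudosphere of radius
`1/|H|` centered at the constant point `c = φ + (1/(H(1+qr)))(q−r, q+r, qr−1)`. -/
theorem totally_umbilic_is_pseudosphere
    (D : Set (ℝ × ℝ)) (hD : IsOpen D) (hDconn : IsConnected D)
    (H : ℝ) (hH : H ≠ 0)
    (q r : ℝ × ℝ → ℝ) (hq : ContDiffOn ℝ (⊤ : ℕ∞) q D) (hr : ContDiffOn ℝ (⊤ : ℕ∞) r D)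
    (hqu : ∀ w ∈ D, pu q w = 0) (hrv : ∀ w ∈ D, pv r w = 0)
    (hqrnz : ∀ w ∈ D, 1 + q w * r w ≠ 0)
    (φ : ℝ × ℝ → ℝ × ℝ × ℝ) (hφ : ContDiffOn ℝ (⊤ : ℕ∞) φ D)
    (hφu : ∀ w ∈ D, pu φ w = (2 * pu r w / (H * (1 + q w * r w) ^ 2)) •
      ((1/2 * (1 + q w^2), -(1/2) * (1 - q w^2), -q w) : ℝ × ℝ × ℝ))
    (hφv : ∀ w ∈ D, pv φ w = (2 * pv q w / (H * (1 + q w * r w) ^ 2)) •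
      ((-(1/2) * (1 + r w^2), -(1/2) * (1 - r w^2), -r w) : ℝ × ℝ × ℝ)) :
    (∀ w ∈ D, ∀ w₀ ∈ D,
      φ w + (1 / (H * (1 + q w * r w))) •
        ((q w - r w, q w + r w, q w * r w - 1) : ℝ × ℝ × ℝ)
      = φ w₀ + (1 / (H * (1 + q w₀ * r w₀))) •
        ((q w₀ - r w₀, q w₀ + r w₀, q w₀ * r w₀ - 1) : ℝ × ℝ × ℝ)) ∧
    ∀ w ∈ D,
      mink (φ w - (φ w + (1 / (H * (1 + q w * r w))) •
          ((q w - r w, q w + r w, q w * r w - 1) : ℝ × ℝ × ℝ)))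
        (φ w - (φ w + (1 / (H * (1 + q w * r w))) •
          ((q w - r w, q w + r w, q w * r w - 1) : ℝ × ℝ × ℝ))) = 1 / H ^ 2 := by
  constructor
  · have key : ∀ w ∈ D, HasFDerivAt (𝕜 := ℝ) (fun w : ℝ × ℝ => φ w + (1 / (H * (1 + q w * r w))) •
        ((q w - r w, q w + r w, q w * r w - 1) : ℝ × ℝ × ℝ)) (0 : ℝ × ℝ →L[ℝ] ℝ × ℝ × ℝ) w := by
      intro w hw
      have hn := hD.mem_nhds hw
      have dq : HasFDerivAt q (fderiv ℝ q w) w :=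
        ((hq.contDiffAt hn).differentiableAt (by simp)).hasFDerivAt
      have dr : HasFDerivAt r (fderiv ℝ r w) w :=
        ((hr.contDiffAt hn).differentiableAt (by simp)).hasFDerivAt
      have dφ : HasFDerivAt φ (fderiv ℝ φ w) w :=
        ((hφ.contDiffAt hn).differentiableAt (by simp)).hasFDerivAt
      have hz := hqrnz w hw
      have hHz : H * (1 + q w * r w) ≠ 0 := mul_ne_zero hH hz
      have dqr := dq.mul dr
      have dk := (hasDerivAt_inv hHz).comp_hasFDerivAt w ((dqr.const_add 1).const_mul H)
      have dN := (dq.sub dr).prodMk ((dq.add dr).prodMk (dqr.sub_const 1))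
      have dall := dφ.add (dk.smul dN)
      have e1 := hφu w hw
      have e2 := hφv w hw
      have e3 := hqu w hw
      have e4 := hrv w hw
      simp only [pu, pv] at e1 e2 e3 e4
      have dall2 := dall.congr_fderiv (g' := 0) (by
        apply ContinuousLinearMap.ext
        rintro ⟨a, b⟩
        have hab : ((a, b) : ℝ × ℝ) = a • ((1, 0) : ℝ × ℝ) + b • ((0, 1) : ℝ × ℝ) := by simp
        rw [hab, map_add, map_smul, map_smul]
        have h1 : ∀ L : ℝ × ℝ →L[ℝ] ℝ × ℝ × ℝ, L (1, 0) = 0 → L (0, 1) = 0 →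
          a • L (1, 0) + b • L (0, 1) = 0 := by
          intro L h h'
          simp [h, h']
        refine (h1 _ ?_ ?_).trans (by simp)
        · simp [e1, e3]
          refine ⟨?_, ?_, ?_⟩ <;> field_simp <;> ring
        · simp [e2, e4]
          refine ⟨?_, ?_, ?_⟩ <;> field_simp <;> ring)
      refine dall2.congr_of_eventuallyEq (Filter.Eventually.of_forall fun x => ?_)
      simp
    intro w hw w₀ hw₀
    exact hD.is_const_of_fderiv_eq_zero hDconn.isPreconnected
      (fun x hx => (key x hx).differentiableAt.differentiableWithinAt)
      (fun x hx => (key x hx).fderiv) hw hw₀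
  · intro w hw
    have hz := hqrnz w hw
    simp [mink]
    field_simp
    ring
end
end

section
/- (Lorentz Enneper surfaces.) For ε = ±1 define φ^{(ε)} : ℝ² → ℝ³ by φ^{(ε)}(u,v) = ½(u + u³/3, −u + u³/3, −εu²) + ½(−v − v³/3, −v + v³/3, −v²). Then φ^{(ε)}_{uv} = 0, ⟨φ^{(ε)}_u, φ^{(ε)}_u⟩ = ⟨φ^{(ε)}_v, φ^{(ε)}_v⟩ = 0, and ⟨φ^{(ε)}_u, φ^{(ε)}_v⟩ = ½(1 + εuv)²; hence φ^{(ε)} is a timelike minimal surface with induced metric I = (1 + εuv)² du dv. -/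
noncomputable section

/-- The Lorentz Enneper surface `φ^{(ε)}(u,v) = ½(u+u³/3, −u+u³/3, −εu²) + ½(−v−v³/3, −v+v³/3, −v²)`. -/
def enneper (ε : ℝ) (z : ℝ × ℝ) : ℝ × ℝ × ℝ :=
  (1/2 * (z.1 + z.1^3/3) + 1/2 * (-z.2 - z.2^3/3),
   1/2 * (-z.1 + z.1^3/3) + 1/2 * (-z.2 + z.2^3/3),
   1/2 * (-(ε * z.1^2)) + 1/2 * (-z.2^2))

theorem enn_diff (ε : ℝ) : Differentiable ℝ (enneper ε) := by
  unfold enneper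
  fun_prop

theorem pu_eq {f : ℝ × ℝ → ℝ × ℝ × ℝ} {w : ℝ × ℝ} {d : ℝ × ℝ × ℝ} (hf : DifferentiableAt ℝ f w)
    (h : HasDerivAt (fun t => f (t, w.2)) d w.1) : pu f w = d := by
  have h1 : HasDerivAt (fun t : ℝ => (t, w.2)) ((1 : ℝ), (0 : ℝ)) w.1 :=
    (hasDerivAt_id w.1).prodMk (hasDerivAt_const w.1 w.2)
  exact (HasFDerivAt.comp_hasDerivAt (f := fun t : ℝ => (t, w.2)) w.1 hf.hasFDerivAt h1).unique h

theorem pv_eq {f : ℝ × ℝ → ℝ × ℝ × ℝ} {w : ℝ × ℝ} {d : ℝ × ℝ × ℝ} (hf : DifferentiableAt ℝ f w)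
    (h : HasDerivAt (fun t => f (w.1, t)) d w.2) : pv f w = d := by
  have h1 : HasDerivAt (fun t : ℝ => (w.1, t)) ((0 : ℝ), (1 : ℝ)) w.2 :=
    (hasDerivAt_const w.2 w.1).prodMk (hasDerivAt_id w.2)
  exact (HasFDerivAt.comp_hasDerivAt (f := fun t : ℝ => (w.1, t)) w.2 hf.hasFDerivAt h1).unique h

theorem pu_enn (ε : ℝ) : pu (enneper ε) =
    fun w => (1/2 * (1 + w.1^2), 1/2 * (-1 + w.1^2), -(ε * w.1)) := by
  funext w
  apply pu_eq (enn_diff ε w)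
  have i := hasDerivAt_id' w.1
  refine HasDerivAt.prodMk ?_ (HasDerivAt.prodMk ?_ ?_)
  · convert ((i.add ((i.pow 3).div_const 3)).const_mul (1/2)).add_const
      (1/2 * (-w.2 - w.2^3/3)) using 1
    all_goals norm_num
    all_goals ring
  · convert ((i.neg.add ((i.pow 3).div_const 3)).const_mul (1/2)).add_const
      (1/2 * (-w.2 + w.2^3/3)) using 1
    all_goals norm_num
    all_goals ring
  · convert ((((i.pow 2).const_mul ε).neg).const_mul (1/2)).add_const
      (1/2 * (-w.2^2)) using 1
    all_goals norm_num
    all_goals ring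

theorem pv_enn (ε : ℝ) : pv (enneper ε) =
    fun w => (1/2 * (-1 - w.2^2), 1/2 * (-1 + w.2^2), -w.2) := by
  funext w
  apply pv_eq (enn_diff ε w)
  have i := hasDerivAt_id' w.2
  refine HasDerivAt.prodMk ?_ (HasDerivAt.prodMk ?_ ?_)
  · convert ((i.neg.sub ((i.pow 3).div_const 3)).const_mul (1/2)).const_add
      (1/2 * (w.1 + w.1^3/3)) using 1
    all_goals norm_num
    all_goals ring
  · convert ((i.neg.add ((i.pow 3).div_const 3)).const_mul (1/2)).const_add
      (1/2 * (-w.1 + w.1^3/3)) using 1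
    all_goals norm_num
    all_goals ring
  · convert (((i.pow 2).neg).const_mul (1/2)).const_add
      (1/2 * (-(ε * w.1^2))) using 1
    all_goals norm_num
    all_goals ring

/-- Lorentz Enneper surfaces: for `ε = ±1`, `φ^{(ε)}` is a timelike minimal surface
(`φ_uv = 0`, `⟨φ_u,φ_u⟩ = ⟨φ_v,φ_v⟩ = 0`) with `⟨φ_u,φ_v⟩ = ½(1+εuv)²`,
i.e. induced metric `(1+εuv)² du dv`. -/
theorem lorentz_enneper_surface (ε : ℝ) (hε : ε = 1 ∨ ε = -1) :
    ∀ w : ℝ × ℝ,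
      pv (pu (enneper ε)) w = 0 ∧
      mink (pu (enneper ε) w) (pu (enneper ε) w) = 0 ∧
      mink (pv (enneper ε) w) (pv (enneper ε) w) = 0 ∧
      mink (pu (enneper ε) w) (pv (enneper ε) w) = 1/2 * (1 + ε * w.1 * w.2) ^ 2 := by
  intro w
  have he : ε ^ 2 = 1 := by rcases hε with h | h <;> rw [h] <;> norm_num
  refine ⟨?_, ?_, ?_, ?_⟩
  · rw [pu_enn]
    apply pv_eq (by fun_prop)
    exact hasDerivAt_const w.2 ((1/2 * (1 + w.1^2), 1/2 * (-1 + w.1^2), -(ε * w.1)) : ℝ × ℝ × ℝ)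
  · rw [pu_enn]
    simp only [mink]
    linear_combination w.1 ^ 2 * he
  · rw [pv_enn]
    simp only [mink]
    ring
  · rw [pu_enn, pv_enn]
    simp only [mink]
    linear_combination (-1/2) * w.1 ^ 2 * w.2 ^ 2 * he
end
end
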